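/- Let G be a quasi-banana graph with first gonality gon_1(G) = k, where k ≠ 2. Then any two divisors on G realising the second gonality are linearly equivalent. -/

import Mathlib

open Finset

variable {V : Type*} [Fintype V] [DecidableEq V]

/-- A finite loopless multigraph on vertex type `V`, given by symmetric edge multiplicities. -/
structure Multigraph (V : Type*) [Fintype V] [DecidableEq V] where
  mult : V → V → ℕ
  symm : ∀ u v, mult u v = mult v u
  loopless : ∀ v, mult v v = 0

namespace Multigraph

def Adj (G : Multigraph V) (u v : V) : Prop := 0 < G.mult u v

/-- A graph is connected. -/
def Connected (G : Multigraph V) : Prop :=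
  Nonempty V ∧ ∀ u v : V, Relation.ReflTransGen G.Adj u v

/-- Valence of a vertex. -/
def valence (G : Multigraph V) (v : V) : ℕ := ∑ u, G.mult v u

/-- The Laplacian applied to an integer-valued function on the vertices. -/
def laplacian (G : Multigraph V) (f : V → ℤ) : V → ℤ :=
  fun w => ∑ u, (G.mult w u : ℤ) * (f w - f u)

/-- Degree of a divisor. -/
def degree (D : V → ℤ) : ℤ := ∑ v, D v

/-- A divisor is effective if all coefficients are nonnegative. -/
def Effective (D : V → ℤ) : Prop := ∀ v, 0 ≤ D v

/-- Linear equivalence of divisors: they differ by a sequence of chip-firing moves,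
equivalently by a Laplacian of an integer function. -/
def LinEquiv (G : Multigraph V) (D D' : V → ℤ) : Prop :=
  ∃ f : V → ℤ, D' = D - G.laplacian f

/-- A divisor is winnable if it is linearly equivalent to an effective divisor. -/
def Winnable (G : Multigraph V) (D : V → ℤ) : Prop :=
  ∃ E : V → ℤ, Effective E ∧ G.LinEquiv D E

/-- The Baker–Norine rank of a divisor: the largest `r` such that `D - E` is winnable for
every effective divisor `E` of degree `r` (the defining set contains all negative integers,
and its supremum is `-1` precisely when `D` itself is not winnable). -/
noncomputable def rank (G : Multigraph V) (D : V → ℤ) : ℤ :=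
  sSup {r : ℤ | ∀ E : V → ℤ, Effective E → degree E = r → G.Winnable (fun w => D w - E w)}

/-- The `k`-th gonality of a graph: the smallest degree of a divisor of rank `k`. -/
noncomputable def gonality (G : Multigraph V) (k : ℤ) : ℤ :=
  sInf {d : ℤ | ∃ D : V → ℤ, G.rank D = k ∧ degree D = d}

/-- A graph is gonality-tight if its second gonality exceeds its first by exactly 1. -/
def GonalityTight (G : Multigraph V) : Prop :=
  G.gonality 2 = G.gonality 1 + 1

/-- A divisor realises the `k`-th gonality if it has rank `k` and degree `gon_k(G)`. -/
def Realises (G : Multigraph V) (k : ℤ) (D : V → ℤ) : Prop :=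
  G.rank D = k ∧ degree D = G.gonality k

/-- A divisor is `v`-reduced: nonnegative away from `v`, and set-firing any nonempty set of
vertices not containing `v` creates a negative coefficient inside the set. -/
def Reduced (G : Multigraph V) (v : V) (D : V → ℤ) : Prop :=
  (∀ w, w ≠ v → 0 ≤ D w) ∧
    ∀ U : Finset V, U.Nonempty → v ∉ U →
      ∃ w ∈ U, D w - ∑ u ∈ Uᶜ, (G.mult w u : ℤ) < 0

/-- The genus (first Betti number) of a graph: `|E| - |V| + 1`. -/
def genus (G : Multigraph V) : ℤ :=
  ((∑ u, ∑ v, G.mult u v : ℕ) : ℤ) / 2 - Fintype.card V + 1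

/-- The canonical divisor of a graph. -/
def canonical (G : Multigraph V) : V → ℤ :=
  fun w => (G.valence w : ℤ) - 2

/-- The subgraph induced on a set `S` of vertices (with all edges among `S`). -/
def induce (G : Multigraph V) (S : Finset V) : Multigraph {x // x ∈ S} where
  mult a b := G.mult a b
  symm a b := G.symm a b
  loopless a := G.loopless a

/-- `G.SeparatedBy u w v` means every path from `w` to `v` passes through `u`. -/
def SeparatedBy (G : Multigraph V) (u w v : V) : Prop :=
  ¬ Relation.ReflTransGen (fun x y => G.Adj x y ∧ x ≠ u ∧ y ≠ u) w v

end Multigraph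

/-- Size of the `i`-th level of a quasi-banana graph: level `0` has a single vertex. -/
def qbSize (q : ℕ → ℕ) (i : ℕ) : ℕ := if i = 0 then 1 else q i

/-- `ℓ` is a quasi-banana labelling of `G` exhibiting `G ≅ QB_m(q_1, …, q_m)`:
`ℓ` is a bijection onto the pairs `(i, j)` with `i ≤ m`, `1 ≤ j ≤ qbSize q i`
(vertex `u_{i,j}` is the vertex labelled `(i,j)`), and the edge multiplicities are:
one edge between distinct vertices of the same level, `(∑_{k=1}^{i} q_k) + 2` edges
between `u_{i,1}` and each `u_{i+1,j}`, and no other edges. -/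
def Multigraph.IsQBLabelling (G : Multigraph V) (m : ℕ) (q : ℕ → ℕ) (ℓ : V → ℕ × ℕ) : Prop :=
  (∀ i, 1 ≤ i → i ≤ m → 0 < q i) ∧
  Function.Injective ℓ ∧
  (∀ v : V, (ℓ v).1 ≤ m ∧ 1 ≤ (ℓ v).2 ∧ (ℓ v).2 ≤ qbSize q (ℓ v).1) ∧
  (∀ i j : ℕ, i ≤ m → 1 ≤ j → j ≤ qbSize q i → ∃ v, ℓ v = (i, j)) ∧
  (∀ v w : V, v ≠ w → G.mult v w =
    if (ℓ v).1 = (ℓ w).1 then 1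
    else if (ℓ v).1 + 1 = (ℓ w).1 ∧ (ℓ v).2 = 1 then (∑ i ∈ Finset.Icc 1 (ℓ v).1, q i) + 2
    else if (ℓ w).1 + 1 = (ℓ v).1 ∧ (ℓ w).2 = 1 then (∑ i ∈ Finset.Icc 1 (ℓ w).1, q i) + 2
    else 0)

/-- A graph is a quasi-banana graph if it is isomorphic to some `QB_m(N)`. -/
def Multigraph.IsQuasiBanana (G : Multigraph V) : Prop :=
  ∃ (m : ℕ) (q : ℕ → ℕ) (ℓ : V → ℕ × ℕ), G.IsQBLabelling m q ℓ

/-- The graph obtained from `G'` by attaching a complete graph `K_n`: `n` new vertices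
pairwise joined by exactly one edge, each joined to `v` by exactly `k+1` edges. -/
def attachComplete (G' : Multigraph V) (v : V) (k n : ℕ) : Multigraph (V ⊕ Fin n) where
  mult x y :=
    match x, y with
    | Sum.inl a, Sum.inl b => G'.mult a b
    | Sum.inl a, Sum.inr _ => if a = v then k + 1 else 0
    | Sum.inr _, Sum.inl b => if b = v then k + 1 else 0
    | Sum.inr i, Sum.inr j => if i = j then 0 else 1
  symm := by
    rintro (a | i) (b | j)
    · exact G'.symm a b
    · rfl
    · rfl
    · by_cases h : i = j
      · simp [h]
      · simp [h, Ne.symm h]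
  loopless := by
    rintro (a | i)
    · exact G'.loopless a
    · simp

/-!
A divisor that is reduced at the bottom vertex `p 0 = u_{0,1}` is the end of a maximal firing
script, so by the maximum principle any script `f` leading from it to an effective divisor is at
most `f (p i)` above level `i`. The net flow of such a script across the edges leaving level `i` is
`N + 1` times its drop from `p i` to level `i + 1`, where `N` is the number of vertices below the
cut, and as soon as this drop is positive every vertex `z` of level `i + 1` satisfies
`1 ≤ D z + (f (p i) - f z)`. By induction on the levels a divisor of rank at least `r ≥ 1` has
degree at least `n + r - 1`, where `n` is the number of vertices, and this is attained for
`r = 1, 2`.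

In the extremal case `r = 2` one looks at the last level. If some vertex `x` of it carries no chip,
then exactly `N + 2` chips lie below it and every script that brings a chip to `x` has drop one.
This is impossible: for two lower vertices because the multiplicities at `p 0` are even, and
otherwise because a second vertex of the last level could be demanded together with `x`. So each
vertex of the last level carries a chip, and asking for a second chip on `p m` moves all `n + 1`
chips to `p m`. Only `n = 2`, that is first gonality `2`, escapes both arguments.
-/

namespace Multigraph

section Laplacian

variable (G : Multigraph V)

theorem laplacian_zero : G.laplacian 0 = 0 := by
  ext w
  simp [laplacian]

theorem laplacian_add (f g : V → ℤ) : G.laplacian (f + g) = G.laplacian f + G.laplacian g := by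
  ext w
  simp only [laplacian, Pi.add_apply, ← sum_add_distrib]
  exact sum_congr rfl fun u _ => by ring

theorem laplacian_neg (f : V → ℤ) : G.laplacian (-f) = -G.laplacian f := by
  rw [← add_eq_zero_iff_eq_neg, ← laplacian_add, neg_add_cancel, laplacian_zero]

theorem laplacian_sub (f g : V → ℤ) : G.laplacian (f - g) = G.laplacian f - G.laplacian g := by
  rw [sub_eq_add_neg, laplacian_add, laplacian_neg, sub_eq_add_neg]

theorem laplacian_sub_const (f : V → ℤ) (c : ℤ) :
    G.laplacian (fun x => f x - c) = G.laplacian f := by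
  ext w
  simp [laplacian]

theorem laplacian_indicator_of_mem {U : Finset V} {w : V} (hw : w ∈ U) :
    G.laplacian ((U : Set V).indicator 1) w = ∑ u ∈ Uᶜ, (G.mult w u : ℤ) := by
  rw [laplacian, ← sum_add_sum_compl U, sum_eq_zero fun u hu => by simp [hw, hu], zero_add]
  exact sum_congr rfl fun u hu => by simp [hw, mem_compl.1 hu]

theorem laplacian_indicator_of_notMem {U : Finset V} {w : V} (hw : w ∉ U) :
    G.laplacian ((U : Set V).indicator 1) w = -∑ u ∈ U, (G.mult w u : ℤ) := by
  rw [laplacian, ← sum_add_sum_compl U, ← sum_neg_distrib,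
    sum_eq_zero (s := Uᶜ) fun u hu => by simp [hw, mem_compl.1 hu], add_zero]
  exact sum_congr rfl fun u hu => by simp [hw, hu]

/-- The contributions of pairs inside `S` cancel because the multiplicities are symmetric. -/
theorem sum_laplacian (f : V → ℤ) (S : Finset V) :
    ∑ w ∈ S, G.laplacian f w = ∑ w ∈ S, ∑ u ∈ Sᶜ, (G.mult w u : ℤ) * (f w - f u) := by
  have inner_eq_neg : ∑ w ∈ S, ∑ u ∈ S, (G.mult w u : ℤ) * (f w - f u)
      = -∑ w ∈ S, ∑ u ∈ S, (G.mult w u : ℤ) * (f w - f u) := by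
    conv_lhs => rw [sum_comm]
    simp only [← sum_neg_distrib]
    refine sum_congr rfl fun w _ => sum_congr rfl fun u _ => ?_
    rw [G.symm u w]
    ring
  simp only [laplacian, ← sum_add_sum_compl S, sum_add_distrib]
  linarith

theorem degree_laplacian (f : V → ℤ) : degree (G.laplacian f) = 0 := by
  rw [degree, sum_laplacian, compl_univ]
  simp

theorem degree_sub_laplacian (D f : V → ℤ) : degree (D - G.laplacian f) = degree D := by
  simpa only [degree, Pi.sub_apply, sum_sub_distrib, sub_eq_self] using G.degree_laplacian f

end Laplacian

section LinEquiv

variable {G : Multigraph V} {D D' D'' : V → ℤ}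

theorem LinEquiv.refl (G : Multigraph V) (D : V → ℤ) : G.LinEquiv D D :=
  ⟨0, by rw [laplacian_zero, sub_zero]⟩

theorem LinEquiv.symm (h : G.LinEquiv D D') : G.LinEquiv D' D := by
  obtain ⟨f, rfl⟩ := h
  exact ⟨-f, by rw [laplacian_neg]; abel⟩

theorem LinEquiv.trans (h : G.LinEquiv D D') (h' : G.LinEquiv D' D'') : G.LinEquiv D D'' := by
  obtain ⟨f, rfl⟩ := h
  obtain ⟨g, rfl⟩ := h'
  exact ⟨f + g, by rw [laplacian_add]; abel⟩

theorem LinEquiv.degree_eq (h : G.LinEquiv D D') : degree D' = degree D := by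
  obtain ⟨f, rfl⟩ := h
  exact G.degree_sub_laplacian D f

theorem linEquiv_single_degree {f : V → ℤ} {x : V}
    (hf : ∀ w, w ≠ x → (D - G.laplacian f) w = 0) :
    G.LinEquiv D (Pi.single x (degree D)) := by
  refine ⟨f, ?_⟩
  rw [← G.degree_sub_laplacian D f, degree, sum_eq_single x (fun w _ => hf w) (by simp)]
  ext w
  rcases eq_or_ne w x with rfl | hw
  · rw [Pi.single_eq_same]
  · rw [Pi.single_eq_of_ne hw, hf w hw]

theorem winnable_sub_iff {E : V → ℤ} :
    G.Winnable (fun w => D w - E w) ↔ ∃ f, E ≤ D - G.laplacian f := by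
  constructor
  · rintro ⟨_, hF, f, rfl⟩
    exact ⟨f, fun w => le_sub_comm.1 (sub_nonneg.1 (hF w))⟩
  · rintro ⟨f, hf⟩
    exact ⟨_, fun w => sub_nonneg.2 (le_sub_comm.1 (hf w)), f, rfl⟩

end LinEquiv

section Rank

variable {G : Multigraph V} {D D' : V → ℤ} {r : ℤ}

/-- Membership in the set whose supremum is the rank of `D`; for `r ≥ 0` it says that the rank
of `D` is at least `r`. -/
def RankGE (G : Multigraph V) (D : V → ℤ) (r : ℤ) : Prop :=
  ∀ E : V → ℤ, Effective E → degree E = r → G.Winnable (fun w => D w - E w)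

omit [DecidableEq V] in
theorem Effective.apply_le_degree {E : V → ℤ} (hE : Effective E) (x : V) : E x ≤ degree E :=
  single_le_sum (fun w _ => hE w) (mem_univ x)

omit [Fintype V] [DecidableEq V] in
theorem Effective.add {E F : V → ℤ} (hE : Effective E) (hF : Effective F) : Effective (E + F) :=
  fun w => add_nonneg (hE w) (hF w)

omit [Fintype V] in
theorem effective_single {c : ℤ} (hc : 0 ≤ c) (x : V) : Effective (Pi.single x c) :=
  (Pi.single_nonneg.2 hc : (0 : V → ℤ) ≤ Pi.single x c)

theorem degree_single (x : V) (c : ℤ) : degree (Pi.single x c) = c := by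
  simp [degree]

theorem RankGE.exists_le (h : G.RankGE D r) {E : V → ℤ} (hE : Effective E)
    (hdeg : degree E = r) : ∃ f, Effective (D - G.laplacian f) ∧ E ≤ D - G.laplacian f := by
  obtain ⟨f, hf⟩ := winnable_sub_iff.1 (h E hE hdeg)
  exact ⟨f, fun w => (hE w).trans (hf w), hf⟩

theorem RankGE.exists_single_le (h : G.RankGE D r) (hr : 0 ≤ r) (x : V) :
    ∃ f, Effective (D - G.laplacian f) ∧ Pi.single x r ≤ D - G.laplacian f :=
  h.exists_le (effective_single hr x) (degree_single x r)

theorem RankGE.exists_single_add_single_le {a b : ℤ} (h : G.RankGE D (a + b)) (ha : 0 ≤ a)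
    (hb : 0 ≤ b) (x y : V) :
    ∃ f, Effective (D - G.laplacian f) ∧ Pi.single x a + Pi.single y b ≤ D - G.laplacian f :=
  h.exists_le ((effective_single ha x).add (effective_single hb y))
    (by simp [degree, sum_add_distrib])

theorem RankGE.winnable [Nonempty V] (h : G.RankGE D r) (hr : 0 ≤ r) : G.Winnable D := by
  obtain ⟨f, hF, -⟩ := h.exists_single_le hr (Classical.arbitrary V)
  exact ⟨_, hF, f, rfl⟩

theorem RankGE.le_degree [Nonempty V] (h : G.RankGE D r) (hr : 0 ≤ r) : r ≤ degree D := by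
  obtain ⟨f, -, hf⟩ := h.exists_single_le hr (Classical.arbitrary V)
  rw [← degree_single (Classical.arbitrary V) r, ← G.degree_sub_laplacian D f]
  exact sum_le_sum fun w _ => hf w

theorem RankGE.congr (h : G.RankGE D r) (hD : G.LinEquiv D D') : G.RankGE D' r := by
  obtain ⟨g, rfl⟩ := hD
  intro E hE hdeg
  obtain ⟨f, hf⟩ := winnable_sub_iff.1 (h E hE hdeg)
  exact winnable_sub_iff.2 ⟨f - g, by rwa [laplacian_sub, sub_sub, add_sub_cancel]⟩

theorem rankGE_rank [Nonempty V] (G : Multigraph V) (D : V → ℤ) : G.RankGE D (G.rank D) := by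
  refine Int.csSup_mem (s := {r | G.RankGE D r}) ⟨-1, fun E hE hdeg => ?_⟩
    ⟨max 0 (degree D), fun r hr => ?_⟩
  · have : 0 ≤ degree E := sum_nonneg fun w _ => hE w
    omega
  · rcases le_total r 0 with h0 | h0
    · exact le_max_of_le_left h0
    · exact le_max_of_le_right (RankGE.le_degree hr h0)

end Rank

section Reduced

variable {G : Multigraph V} {D : V → ℤ}

theorem Connected.eq_of_laplacian_eq_zero (hG : G.Connected) {f : V → ℤ}
    (hf : G.laplacian f = 0) (x y : V) : f x = f y := by
  have : Nonempty V := hG.1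
  obtain ⟨t, ht⟩ := Finite.exists_max f
  have adj_max : ∀ a b, G.Adj a b → f a = f t → f b = f t := by
    intro a b hab ha
    have summand_nonneg : ∀ u ∈ univ, (0 : ℤ) ≤ G.mult a u * (f a - f u) := fun u _ =>
      mul_nonneg (Nat.cast_nonneg _) (sub_nonneg.2 (ha ▸ ht u))
    have hb := (sum_eq_zero_iff_of_nonneg summand_nonneg).1 (congrFun hf a) b (mem_univ b)
    have hmult : (G.mult a b : ℤ) ≠ 0 := Nat.cast_ne_zero.2 hab.ne'
    linarith [(mul_eq_zero.1 hb).resolve_left hmult]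
  have eq_max : ∀ z, f z = f t := fun z => by
    induction hG.2 t z with
    | refl => rfl
    | tail _ hab ih => exact adj_max _ _ hab ih
  rw [eq_max x, eq_max y]

theorem Connected.finite_setOf_effective_sub_laplacian (hG : G.Connected) (D : V → ℤ) (v : V) :
    {f | f v = 0 ∧ Effective (D - G.laplacian f)}.Finite := by
  refine Set.Finite.of_injOn (f := fun f => D - G.laplacian f)
    (t := Set.Icc 0 fun _ => degree D) ?_ ?_ (Set.finite_Icc _ _)
  · rintro f ⟨-, hf⟩
    exact ⟨hf, fun w => G.degree_sub_laplacian D f ▸ hf.apply_le_degree w⟩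
  · rintro f ⟨hfv, -⟩ g ⟨hgv, -⟩ hfg
    have hker : G.laplacian (f - g) = 0 := by
      rw [laplacian_sub, sub_eq_zero]
      exact sub_right_injective hfg
    ext x
    have := hG.eq_of_laplacian_eq_zero hker x v
    rwa [Pi.sub_apply, Pi.sub_apply, hfv, hgv, sub_self, sub_eq_zero] at this

/-- A maximal firing script vanishing at `v` leads to a reduced divisor: a set `U` that could
still be fired would give the larger script `f + 1_U`. -/
theorem Winnable.exists_reduced (hD : G.Winnable D) (hG : G.Connected) (v : V) :
    ∃ D', G.LinEquiv D D' ∧ Effective D' ∧ G.Reduced v D' := by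
  obtain ⟨_, hF, f₀, rfl⟩ := hD
  obtain ⟨f, ⟨hfv, hf⟩, hmax⟩ :=
    (hG.finite_setOf_effective_sub_laplacian D v).exists_maximal
      ⟨fun x => f₀ x - f₀ v, sub_self _, by rwa [laplacian_sub_const]⟩
  refine ⟨_, ⟨f, rfl⟩, hf, fun w _ => hf w, fun U ⟨u, hu⟩ hv => ?_⟩
  by_contra! hfire
  have hmem : f + (U : Set V).indicator 1 ∈ {f | f v = 0 ∧ Effective (D - G.laplacian f)} := by
    refine ⟨by simp [hfv, hv], fun w => ?_⟩
    rw [laplacian_add, ← sub_sub, Pi.sub_apply]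
    by_cases hw : w ∈ U
    · rw [laplacian_indicator_of_mem G hw]
      exact hfire w hw
    · rw [laplacian_indicator_of_notMem G hw, sub_neg_eq_add]
      exact add_nonneg (hf w) (sum_nonneg fun _ _ => Nat.cast_nonneg _)
  have hle := hmax hmem (le_add_of_nonneg_right <| Set.indicator_nonneg fun _ _ => zero_le_one) u
  simp [hu] at hle

theorem Reduced.exists_adj_forall_le {v : V} (hD : G.Reduced v D) {f : V → ℤ}
    (hf : ∀ w ≠ v, 0 ≤ (D - G.laplacian f) w) {S : Finset V} (hS : S.Nonempty) (hv : v ∉ S) :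
    ∃ w ∈ S, ∃ u ∉ S, G.Adj w u ∧ ∀ x ∈ S, f x ≤ f u := by
  obtain ⟨t, htS, ht⟩ := S.exists_max_image f hS
  by_contra! hcon
  obtain ⟨w, hw, hneg⟩ := hD.2 (S.filter (f · = f t)) ⟨t, by simp [htS]⟩ (by simp [hv])
  obtain ⟨hwS, hwt⟩ := mem_filter.1 hw
  have mult_le : ∀ u ∈ (S.filter (f · = f t))ᶜ, (G.mult w u : ℤ) ≤ G.mult w u * (f w - f u) := by
    intro u hu
    rcases Nat.eq_zero_or_pos (G.mult w u) with h0 | hadj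
    · simp [h0]
    have hlt : f u < f t := by
      by_cases huS : u ∈ S
      · exact (ht u huS).lt_of_ne fun h => mem_compl.1 hu (mem_filter.2 ⟨huS, h⟩)
      · obtain ⟨x, hxS, hx⟩ := hcon w hwS u huS hadj
        exact hx.trans_le (ht x hxS)
    exact le_mul_of_one_le_right (Nat.cast_nonneg _) (by omega)
  have hlap : G.laplacian f w
      = ∑ u ∈ (S.filter (f · = f t))ᶜ, (G.mult w u : ℤ) * (f w - f u) := by
    rw [laplacian, ← sum_add_sum_compl (S.filter (f · = f t)), sum_eq_zero, zero_add]
    intro u hu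
    rw [hwt, (mem_filter.1 hu).2, sub_self, mul_zero]
  have hDw := hf w (ne_of_mem_of_not_mem hwS hv)
  rw [Pi.sub_apply, hlap] at hDw
  linarith [sum_le_sum mult_le]

end Reduced

section Levels

/-- The vertices of level at most `i`, for a level function `lev`. -/
def lower (lev : V → ℕ) (i : ℕ) : Finset V := {v | lev v ≤ i}

/-- The vertices of level exactly `i`, for a level function `lev`. -/
def level (lev : V → ℕ) (i : ℕ) : Finset V := {v | lev v = i}

variable {lev : V → ℕ} {i : ℕ}

omit [DecidableEq V] in
@[simp]
theorem mem_lower {v : V} : v ∈ lower lev i ↔ lev v ≤ i := by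
  simp [lower]

omit [DecidableEq V] in
@[simp]
theorem mem_level {v : V} : v ∈ level lev i ↔ lev v = i := by
  simp [level]

theorem lower_succ (lev : V → ℕ) (i : ℕ) :
    lower lev (i + 1) = lower lev i ∪ level lev (i + 1) := by
  ext v
  simp only [mem_union, mem_lower, mem_level]
  omega

omit [DecidableEq V] in
theorem disjoint_lower_level (lev : V → ℕ) (i : ℕ) :
    Disjoint (lower lev i) (level lev (i + 1)) := by
  refine disjoint_left.2 fun v hv hv' => ?_
  rw [mem_lower] at hv
  rw [mem_level] at hv'
  omega

omit [DecidableEq V] in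
theorem card_lower_succ (lev : V → ℕ) (i : ℕ) :
    #(lower lev (i + 1)) = #(lower lev i) + #(level lev (i + 1)) := by
  classical rw [lower_succ, card_union_of_disjoint (disjoint_lower_level lev i)]

omit [DecidableEq V] in
theorem sum_lower_succ (lev : V → ℕ) (i : ℕ) (D : V → ℤ) :
    ∑ v ∈ lower lev (i + 1), D v = ∑ v ∈ lower lev i, D v + ∑ v ∈ level lev (i + 1), D v := by
  classical rw [lower_succ, sum_union (disjoint_lower_level lev i)]

/-- The net outflow of the firing script `f` along the edges from the vertex `p i` to level
`i + 1`, counted with each of these multiple edges taken once. -/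
def levelDrop (lev : V → ℕ) (p : ℕ → V) (f : V → ℤ) (i : ℕ) : ℤ :=
  ∑ z ∈ level lev (i + 1), (f (p i) - f z)

end Levels

/-- The description of a quasi-banana graph used in the proof: `lev v` is the level of `v`, the
anchor `p i` is the vertex `u_{i,1}` of the paper, and the multiplicity `q_1 + ⋯ + q_i + 2` is
expressed as the number of vertices of level at most `i`, plus one. -/
structure QBLeveling (G : Multigraph V) (m : ℕ) (lev : V → ℕ) (p : ℕ → V) : Prop where
  lev_le : ∀ v, lev v ≤ m
  lev_anchor : ∀ i ≤ m, lev (p i) = i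
  eq_anchor_zero : ∀ v, lev v = 0 → v = p 0
  mult_level : ∀ v w, v ≠ w → lev v = lev w → G.mult v w = 1
  mult_anchor : ∀ i w, lev w = i + 1 → G.mult (p i) w = #(lower lev i) + 1
  mult_eq_zero : ∀ i v w, lev v ≤ i → i < lev w → v ≠ p i → G.mult v w = 0

namespace QBLeveling

variable {G : Multigraph V} {m : ℕ} {lev : V → ℕ} {p : ℕ → V}

section Basic

theorem lower_top (h : QBLeveling G m lev p) : lower lev m = univ := by
  ext v
  simp [h.lev_le v]

theorem card_lower_top (h : QBLeveling G m lev p) : #(lower lev m) = Fintype.card V := by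
  rw [h.lower_top, card_univ]

theorem lower_zero (h : QBLeveling G m lev p) : lower lev 0 = {p 0} := by
  ext v
  rw [mem_lower, mem_singleton, Nat.le_zero]
  exact ⟨h.eq_anchor_zero v, fun hv => hv ▸ h.lev_anchor 0 (Nat.zero_le m)⟩

theorem anchor_zero_mem_lower (h : QBLeveling G m lev p) (i : ℕ) : p 0 ∈ lower lev i := by
  rw [mem_lower, h.lev_anchor 0 (Nat.zero_le m)]
  exact Nat.zero_le i

theorem card_lower_pos (h : QBLeveling G m lev p) (i : ℕ) : 0 < #(lower lev i) :=
  card_pos.2 ⟨p 0, h.anchor_zero_mem_lower i⟩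

/-- The anchor `p 0` is joined to each of its neighbours by exactly two edges. -/
theorem two_dvd_laplacian_anchor_zero (h : QBLeveling G m lev p) (f : V → ℤ) :
    2 ∣ G.laplacian f (p 0) := by
  refine dvd_sum fun u _ => Dvd.dvd.mul_right ?_ _
  have lev_anchor_zero := h.lev_anchor 0 (Nat.zero_le m)
  rcases Nat.lt_trichotomy (lev u) 1 with hu | hu | hu
  · simp [← h.eq_anchor_zero u (by omega), G.loopless]
  · simp [h.mult_anchor 0 u hu, h.lower_zero]
  · rw [h.mult_eq_zero 1 (p 0) u (by omega) hu]
    · simp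
    · intro heq
      rw [heq, h.lev_anchor 1 (by linarith [h.lev_le u])] at lev_anchor_zero
      omega

end Basic

section Flow

theorem sum_lower_laplacian (h : QBLeveling G m lev p) (f : V → ℤ) {i : ℕ} (hi : i ≤ m) :
    ∑ w ∈ lower lev i, G.laplacian f w = (#(lower lev i) + 1) * levelDrop lev p f i := by
  have cut_eq : ∀ u ∈ (lower lev i)ᶜ, ∑ w ∈ lower lev i, (G.mult w u : ℤ) * (f w - f u)
      = if lev u = i + 1 then ((#(lower lev i) : ℤ) + 1) * (f (p i) - f u) else 0 := by
    intro u hu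
    have hiu : i < lev u := by simpa using hu
    rw [sum_eq_single_of_mem (p i) (by simp [h.lev_anchor i hi])]
    · split_ifs with hu'
      · rw [h.mult_anchor i u hu']
        push_cast
        ring
      · have him := hiu.trans_le (h.lev_le u)
        have hne : p i ≠ p (i + 1) := fun heq => by
          have := h.lev_anchor (i + 1) him
          rw [← heq, h.lev_anchor i hi] at this
          omega
        rw [h.mult_eq_zero (i + 1) (p i) u (by rw [h.lev_anchor i hi]; omega) (by omega) hne]
        simp
    · intro w hw hne
      simp [h.mult_eq_zero i w u (mem_lower.1 hw) hiu hne]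
  rw [sum_laplacian, sum_comm, sum_congr rfl cut_eq, ← sum_filter, levelDrop, mul_sum]
  refine sum_congr ?_ fun _ _ => rfl
  ext u
  simp only [mem_filter, mem_compl, mem_lower, mem_level]
  omega

theorem levelDrop_le_laplacian (h : QBLeveling G m lev p) {f : V → ℤ}
    (hf : ∀ i u, i < lev u → f u ≤ f (p i)) {i : ℕ} {z : V} (hz : lev z = i + 1)
    (hfz : f z = f (p i)) : levelDrop lev p f i ≤ G.laplacian f z := by
  rw [levelDrop, level, sum_filter]
  refine sum_le_sum fun u _ => ?_
  rw [← hfz]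
  rcases lt_trichotomy (lev u) (i + 1) with hu | hu | hu
  · rw [if_neg hu.ne, G.symm]
    by_cases hup : u = p i
    · rw [hup, hfz, sub_self, mul_zero]
    · simp [h.mult_eq_zero i u z (by omega) (by omega) hup]
  · rw [if_pos hu]
    by_cases huz : u = z
    · simp [huz]
    · simp [h.mult_level z u (Ne.symm huz) (by omega)]
  · rw [if_neg hu.ne']
    by_cases hzp : z = p (i + 1)
    · exact mul_nonneg (Nat.cast_nonneg _) (sub_nonneg.2 (hzp ▸ hf (i + 1) u hu))
    · simp [h.mult_eq_zero (i + 1) z u hz.le hu hzp]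

theorem apply_le_anchor (h : QBLeveling G m lev p) {D f : V → ℤ} (hD : G.Reduced (p 0) D)
    (hF : Effective (D - G.laplacian f)) (i : ℕ) (u : V) (hu : i < lev u) : f u ≤ f (p i) := by
  obtain ⟨w, hw, v, hv, hadj, hle⟩ := hD.exists_adj_forall_le (fun w _ => hF w)
    (S := (lower lev i)ᶜ) ⟨u, by simpa using hu⟩ (by simpa using h.anchor_zero_mem_lower i)
  rw [mem_compl, mem_lower, not_le] at hw
  rw [notMem_compl, mem_lower] at hv
  have hvp : v = p i := by
    by_contra hne
    rw [Adj, G.symm, h.mult_eq_zero i v w hv hw hne] at hadj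
    exact hadj.false
  exact hvp ▸ hle u (by simpa using hu)

end Flow

section Reduced

variable {D f : V → ℤ} {i : ℕ}

theorem levelDrop_summand_nonneg (h : QBLeveling G m lev p) (hD : G.Reduced (p 0) D)
    (hF : Effective (D - G.laplacian f)) : ∀ z ∈ level lev (i + 1), 0 ≤ f (p i) - f z :=
  fun z hz => sub_nonneg.2 <|
    h.apply_le_anchor hD hF i z (by rw [mem_level.1 hz]; exact i.lt_succ_self)

theorem levelDrop_nonneg (h : QBLeveling G m lev p) (hD : G.Reduced (p 0) D)
    (hF : Effective (D - G.laplacian f)) : 0 ≤ levelDrop lev p f i :=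
  sum_nonneg (h.levelDrop_summand_nonneg hD hF)

theorem sub_laplacian_add_levelDrop_le (h : QBLeveling G m lev p) (hD : G.Reduced (p 0) D)
    (hF : Effective (D - G.laplacian f)) {z : V} (hz : z ∈ level lev (i + 1))
    (hfz : f z = f (p i)) : (D - G.laplacian f) z + levelDrop lev p f i ≤ D z := by
  have := h.levelDrop_le_laplacian (h.apply_le_anchor hD hF) (mem_level.1 hz) hfz
  rw [Pi.sub_apply]
  linarith

theorem apply_lt_anchor (h : QBLeveling G m lev p) (hD : G.Reduced (p 0) D)
    (hF : Effective (D - G.laplacian f)) {z : V} (hz : z ∈ level lev (i + 1))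
    (hgain : D z < (D - G.laplacian f) z) : f z < f (p i) := by
  refine (sub_nonneg.1 (h.levelDrop_summand_nonneg hD hF z hz)).lt_of_ne fun hfz => ?_
  linarith [h.sub_laplacian_add_levelDrop_le hD hF hz hfz,
    h.levelDrop_nonneg (i := i) hD hF]

theorem levelDrop_pos (h : QBLeveling G m lev p) (hD : G.Reduced (p 0) D)
    (hF : Effective (D - G.laplacian f)) {z : V} (hz : z ∈ level lev (i + 1))
    (hgain : D z < (D - G.laplacian f) z) : 1 ≤ levelDrop lev p f i :=
  sum_pos' (h.levelDrop_summand_nonneg hD hF)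
    ⟨z, hz, sub_pos.2 (h.apply_lt_anchor hD hF hz hgain)⟩

theorem apply_eq_anchor_of_levelDrop_eq_one (h : QBLeveling G m lev p)
    (hD : G.Reduced (p 0) D) (hF : Effective (D - G.laplacian f))
    (hdrop : levelDrop lev p f i = 1) {x z : V} (hx : x ∈ level lev (i + 1))
    (hfx : f x < f (p i)) (hz : z ∈ level lev (i + 1)) (hzx : z ≠ x) : f z = f (p i) := by
  have pair_le : (f (p i) - f z) + (f (p i) - f x) ≤ levelDrop lev p f i := by
    rw [← sum_pair (f := fun u => f (p i) - f u) hzx]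
    exact sum_le_sum_of_subset_of_nonneg (by simp [insert_subset_iff, hx, hz])
      fun u hu _ => h.levelDrop_summand_nonneg hD hF u hu
  linarith [h.levelDrop_summand_nonneg hD hF z hz]

theorem one_le_add_anchor_sub (h : QBLeveling G m lev p) (hD : G.Reduced (p 0) D)
    (hD₀ : Effective D) (hF : Effective (D - G.laplacian f))
    (hdrop : 1 ≤ levelDrop lev p f i) {z : V} (hz : z ∈ level lev (i + 1)) :
    1 ≤ D z + (f (p i) - f z) := by
  rcases (h.levelDrop_summand_nonneg hD hF z hz).eq_or_lt with hfz | hfz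
  · linarith [h.sub_laplacian_add_levelDrop_le hD hF hz (by linarith), hF z]
  · linarith [hD₀ z]

theorem card_level_le (h : QBLeveling G m lev p) (hD : G.Reduced (p 0) D)
    (hD₀ : Effective D) (hF : Effective (D - G.laplacian f))
    (hdrop : 1 ≤ levelDrop lev p f i) :
    #(level lev (i + 1)) ≤ ∑ z ∈ level lev (i + 1), D z + levelDrop lev p f i := by
  rw [levelDrop, ← sum_add_distrib, ← nsmul_one, ← sum_const]
  exact sum_le_sum fun z hz => h.one_le_add_anchor_sub hD hD₀ hF hdrop hz

theorem sum_lower_eq (h : QBLeveling G m lev p) (hi : i ≤ m) :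
    ∑ w ∈ lower lev i, D w = ∑ w ∈ lower lev i, (D - G.laplacian f) w
      + (#(lower lev i) + 1) * levelDrop lev p f i := by
  simp only [Pi.sub_apply, sum_sub_distrib, h.sum_lower_laplacian f hi, sub_add_cancel]

end Reduced

section RankBound

variable {D f : V → ℤ} {i : ℕ} {r : ℤ}

theorem sum_lower_add_le (h : QBLeveling G m lev p) (hD : G.Reduced (p 0) D)
    (hD₀ : Effective D) (hF : Effective (D - G.laplacian f)) (hi : i ≤ m)
    (hdrop : 1 ≤ levelDrop lev p f i) :
    ∑ w ∈ lower lev i, (D - G.laplacian f) w + #(lower lev i) * levelDrop lev p f i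
      + #(level lev (i + 1)) ≤ ∑ w ∈ lower lev (i + 1), D w := by
  rw [sum_lower_succ, h.sum_lower_eq (D := D) (f := f) hi]
  linarith [h.card_level_le hD hD₀ hF hdrop]

theorem card_lower_add_le_sum_lower (h : QBLeveling G m lev p) (hD : G.Reduced (p 0) D)
    (hD₀ : Effective D) (hrank : G.RankGE D r) (hr : 1 ≤ r) (hi : i ≤ m) :
    #(lower lev i) + r - 1 ≤ ∑ w ∈ lower lev i, D w := by
  induction i with
  | zero =>
    obtain ⟨f, hF, hf⟩ := hrank.exists_single_le (by omega) (p 0)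
    have hsum := h.sum_lower_eq (D := D) (f := f) hi
    have hfp : r ≤ (D - G.laplacian f) (p 0) := by simpa using hf (p 0)
    rw [h.lower_zero, sum_singleton, sum_singleton, card_singleton] at hsum
    rw [h.lower_zero, sum_singleton, card_singleton]
    push_cast at hsum ⊢
    linarith [h.levelDrop_nonneg (i := 0) hD hF]
  | succ i ih =>
    by_cases hlevel : ∀ z ∈ level lev (i + 1), 1 ≤ D z
    · have hcard := card_nsmul_le_sum _ _ _ hlevel
      rw [nsmul_one] at hcard
      rw [sum_lower_succ, card_lower_succ]
      push_cast
      linarith [ih (by omega)]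
    · push Not at hlevel
      obtain ⟨x, hx, hDx⟩ := hlevel
      obtain ⟨f, hF, hf⟩ := RankGE.exists_single_add_single_le (a := 1) (b := r - 1)
        (by simpa using hrank) zero_le_one (by omega) x (p 0)
      have hfx : 1 ≤ (D - G.laplacian f) x :=
        (by simpa using effective_single (sub_nonneg.2 hr) (p 0) x : (1 : ℤ) ≤ _).trans (hf x)
      have hfp : r - 1 ≤ (D - G.laplacian f) (p 0) :=
        (by simpa using effective_single zero_le_one x (p 0) : r - 1 ≤ _).trans (hf (p 0))
      have hdrop := h.levelDrop_pos hD hF hx (by omega)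
      have hsum : r - 1 ≤ ∑ w ∈ lower lev i, (D - G.laplacian f) w :=
        hfp.trans (single_le_sum (fun w _ => hF w) (h.anchor_zero_mem_lower i))
      have hkey := h.sum_lower_add_le hD hD₀ hF (by omega) hdrop
      have hmul := le_mul_of_one_le_right (Nat.cast_nonneg (α := ℤ) #(lower lev i)) hdrop
      rw [card_lower_succ]
      push_cast
      linarith

end RankBound

section Gonality

variable {D : V → ℤ} {r : ℤ}

theorem card_add_le_degree (h : QBLeveling G m lev p) (hG : G.Connected)
    (hrank : G.RankGE D r) (hr : 1 ≤ r) : Fintype.card V + r - 1 ≤ degree D := by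
  have : Nonempty V := hG.1
  obtain ⟨D', hDD', hD'₀, hD'⟩ := (hrank.winnable (by omega)).exists_reduced hG (p 0)
  have := h.card_lower_add_le_sum_lower hD' hD'₀ (hrank.congr hDD') hr le_rfl
  rwa [h.card_lower_top, h.lower_top, ← degree, hDD'.degree_eq] at this

theorem rank_eq (h : QBLeveling G m lev p) (hG : G.Connected) (hrank : G.RankGE D r)
    (hr : 1 ≤ r) (hdeg : degree D = Fintype.card V + r - 1) : G.rank D = r := by
  refine IsGreatest.csSup_eq ⟨hrank, fun s hs => ?_⟩
  by_contra! hrs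
  have := h.card_add_le_degree hG hs (by omega)
  omega

theorem gonality_eq (h : QBLeveling G m lev p) (hG : G.Connected) (hrank : G.RankGE D r)
    (hr : 1 ≤ r) (hdeg : degree D = Fintype.card V + r - 1) :
    G.gonality r = Fintype.card V + r - 1 := by
  have : Nonempty V := hG.1
  refine IsLeast.csInf_eq ⟨⟨D, h.rank_eq hG hrank hr hdeg, hdeg⟩, ?_⟩
  rintro _ ⟨D', rfl, rfl⟩
  exact h.card_add_le_degree hG (rankGE_rank G D') hr

theorem gonality_one (h : QBLeveling G m lev p) (hG : G.Connected) :
    G.gonality 1 = Fintype.card V := by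
  have hrank : G.RankGE 1 1 := fun E hE hdeg => winnable_sub_iff.2
    ⟨0, by rw [laplacian_zero, sub_zero]; exact fun w => (hE.apply_le_degree w).trans_eq hdeg⟩
  simpa using h.gonality_eq hG hrank le_rfl (by simp [degree])

/-- The vertices cut off from the lower levels and from the rest of its own level by `y`,
together with `y` itself; firing all other vertices moves chips to `y` alone. -/
def above (lev : V → ℕ) (p : ℕ → V) (y : V) : Finset V :=
  {w | w = y ∨ y = p (lev y) ∧ lev y < lev w}

theorem mem_above {y w : V} : w ∈ above lev p y ↔ w = y ∨ y = p (lev y) ∧ lev y < lev w := by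
  simp [above]

theorem laplacian_indicator_above_of_notMem (h : QBLeveling G m lev p) {y w : V}
    (hw : w ∉ above lev p y) :
    G.laplacian ((above lev p y : Set V).indicator 1) w = -G.mult w y := by
  rw [laplacian_indicator_of_notMem G hw, sum_eq_single_of_mem y (mem_above.2 (.inl rfl))]
  intro u hu huy
  obtain ⟨hyp, hyu⟩ := (mem_above.1 hu).resolve_left huy
  rw [mem_above, not_or, not_and, not_lt] at hw
  exact_mod_cast h.mult_eq_zero (lev y) w u (hw.2 hyp) hyu fun hwp => hw.1 (hwp.trans hyp.symm)

theorem mult_eq_zero_of_notMem_above (h : QBLeveling G m lev p) {y w : V}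
    (hw : w ∉ above lev p y) (hyw : lev y < lev w) : G.mult w y = 0 := by
  rw [mem_above, not_or, not_and] at hw
  rw [G.symm]
  exact h.mult_eq_zero (lev y) y w le_rfl hyw fun hyp => hw.2 hyp hyw

theorem mult_le_apply_of_notMem_above (h : QBLeveling G m lev p) {F : V → ℤ}
    (hF₀ : Effective F) {i : ℕ} {y w : V} (hy : lev y = i + 1)
    (hFp : #(lower lev i) < F (p i)) (hF₁ : ∀ u, i < lev u → 1 ≤ F u)
    (hw : w ∉ above lev p y) : G.mult w y ≤ F w := by
  rcases lt_trichotomy (lev w) (i + 1) with hwi | hwi | hwi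
  · by_cases hwp : w = p i
    · rw [hwp, h.mult_anchor i y hy]
      exact_mod_cast hFp
    · rw [h.mult_eq_zero i w y (by omega) (by omega) hwp]
      exact_mod_cast hF₀ w
  · have hwy : w ≠ y := fun hwy => hw (mem_above.2 (.inl hwy))
    rw [h.mult_level w y hwy (hwi.trans hy.symm)]
    exact_mod_cast hF₁ w (by omega)
  · rw [h.mult_eq_zero_of_notMem_above hw (by omega)]
    exact_mod_cast hF₀ w

theorem card_lower_le_laplacian_indicator_above (h : QBLeveling G m lev p) {i : ℕ} {y : V}
    (hy : lev y = i + 1) :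
    #(lower lev (i + 1)) ≤ G.laplacian ((above lev p y : Set V).indicator 1) y := by
  have lev_anchor : lev (p i) = i := h.lev_anchor i (by linarith [h.lev_le y])
  have hyL : y ∈ level lev (i + 1) := mem_level.2 hy
  have hpL : p i ∉ (level lev (i + 1)).erase y := by simp [lev_anchor]
  have mult_eq_one : ∀ u ∈ (level lev (i + 1)).erase y, (G.mult y u : ℤ) = 1 := fun u hu => by
    rw [mem_erase, mem_level] at hu
    exact_mod_cast h.mult_level y u hu.1.symm (hy.trans hu.2.symm)
  rw [laplacian_indicator_of_mem G (mem_above.2 (.inl rfl))]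
  calc (#(lower lev (i + 1)) : ℤ)
      = ∑ u ∈ insert (p i) ((level lev (i + 1)).erase y), (G.mult y u : ℤ) := by
        rw [sum_insert hpL, sum_congr rfl mult_eq_one, G.symm, h.mult_anchor i y hy,
          card_lower_succ, ← card_erase_add_one hyL]
        push_cast [sum_const, nsmul_one]
        ring
    _ ≤ ∑ u ∈ (above lev p y)ᶜ, (G.mult y u : ℤ) := by
        refine sum_le_sum_of_subset_of_nonneg (fun u hu => ?_) fun _ _ _ => Nat.cast_nonneg _
        rw [mem_compl, mem_above, not_or, hy]
        rw [mem_insert, mem_erase, mem_level] at hu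
        rcases hu with rfl | ⟨huy, hu⟩
        · rw [lev_anchor]
          exact ⟨fun hpy => by rw [← hpy, lev_anchor] at hy; omega, by omega⟩
        · exact ⟨huy, by omega⟩

/-- Starting from one chip everywhere and a second one on `p 0`, chips are carried up the anchors
`p 0, p 1, …` to the level of `y`. -/
theorem exists_card_lower_lt_apply (h : QBLeveling G m lev p) {i : ℕ} {y : V}
    (hy : lev y = i) :
    ∃ F, G.LinEquiv (1 + Pi.single (p 0) 1) F ∧ Effective F ∧ #(lower lev i) < F y ∧
      ∀ w, i < lev w → 1 ≤ F w := by
  induction i generalizing y with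
  | zero =>
    refine ⟨_, LinEquiv.refl G _, fun w => ?_, ?_, fun w _ => ?_⟩
    · exact add_nonneg zero_le_one (effective_single zero_le_one (p 0) w)
    · simp [h.lower_zero, h.eq_anchor_zero y hy]
    · exact le_add_of_nonneg_right (effective_single zero_le_one (p 0) w)
  | succ i ih =>
    have him : i ≤ m := by linarith [h.lev_le y]
    obtain ⟨F, hF, hF₀, hFp, hF₁⟩ := ih (h.lev_anchor i him)
    have le_of_mem : ∀ w ∈ above lev p y,
        F w ≤ F w + G.laplacian ((above lev p y : Set V).indicator 1) w := fun w hw => by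
      rw [laplacian_indicator_of_mem G hw]
      exact le_add_of_nonneg_right (sum_nonneg fun _ _ => Nat.cast_nonneg _)
    refine ⟨F + G.laplacian ((above lev p y : Set V).indicator 1),
      hF.trans ⟨-_, by rw [laplacian_neg, sub_neg_eq_add]⟩, fun w => ?_, ?_, fun w hw => ?_⟩
    · by_cases hwy : w ∈ above lev p y
      · exact (hF₀ w).trans (le_of_mem w hwy)
      rw [Pi.add_apply, h.laplacian_indicator_above_of_notMem hwy, ← sub_eq_add_neg, sub_nonneg]
      exact h.mult_le_apply_of_notMem_above hF₀ hy hFp hF₁ hwy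
    · have := h.card_lower_le_laplacian_indicator_above hy
      rw [Pi.add_apply]
      linarith [hF₁ y (by omega)]
    · by_cases hwy : w ∈ above lev p y
      · exact (hF₁ w (by omega)).trans (le_of_mem w hwy)
      · rw [Pi.add_apply, h.laplacian_indicator_above_of_notMem hwy,
          h.mult_eq_zero_of_notMem_above hwy (by omega), Nat.cast_zero, neg_zero, add_zero]
        exact hF₁ w (by omega)

theorem rankGE_one_add_single (h : QBLeveling G m lev p) :
    G.RankGE (1 + Pi.single (p 0) 1) 2 := by
  intro E hE hdeg
  rw [winnable_sub_iff]
  by_cases! hE₁ : ∀ w, E w ≤ 1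
  · refine ⟨0, fun w => ?_⟩
    rw [laplacian_zero, sub_zero]
    exact (hE₁ w).trans (le_add_of_nonneg_right (effective_single zero_le_one (p 0) w))
  · obtain ⟨y, hy⟩ := hE₁
    obtain ⟨_, ⟨f, rfl⟩, hF₀, hFy, -⟩ := h.exists_card_lower_lt_apply (y := y) rfl
    refine ⟨f, fun w => ?_⟩
    have hN : (0 : ℤ) < #(lower lev (lev y)) := Nat.cast_pos.2 (h.card_lower_pos _)
    rcases eq_or_ne w y with rfl | hwy
    · linarith [hE.apply_le_degree w]
    · have hpair : E w + E y ≤ degree E := by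
        rw [← sum_pair hwy]
        exact sum_le_sum_of_subset_of_nonneg (subset_univ _) fun u _ _ => hE u
      linarith [hF₀ w]

theorem gonality_two (h : QBLeveling G m lev p) (hG : G.Connected) :
    G.gonality 2 = Fintype.card V + 1 := by
  rw [h.gonality_eq hG h.rankGE_one_add_single one_le_two]
  · ring
  · rw [degree]
    simp only [Pi.add_apply, Pi.one_apply, sum_add_distrib, sum_pi_single', mem_univ, if_true,
      sum_const, nsmul_one, card_univ]
    ring


end Gonality

section TopLevel

variable {D : V → ℤ} {i : ℕ}

theorem sum_lower_add_sum_level (h : QBLeveling G (i + 1) lev p) (D : V → ℤ) :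
    ∑ w ∈ lower lev i, D w + ∑ w ∈ level lev (i + 1), D w = degree D := by
  rw [← sum_lower_succ, h.lower_top, degree]

theorem card_lower_add_card_level (h : QBLeveling G (i + 1) lev p) :
    #(lower lev i) + #(level lev (i + 1)) = Fintype.card V := by
  rw [← card_lower_succ, h.card_lower_top]

theorem exists_eq_single_on_lower (h : QBLeveling G (i + 1) lev p) (hD : G.Reduced (p 0) D)
    (hD₀ : Effective D) (hrank : G.RankGE D 2) (hdeg : degree D ≤ Fintype.card V + 1) {x y : V}
    (hx : x ∈ level lev (i + 1)) (hDx : D x < 1) (hy : y ∈ lower lev i) :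
    ∃ f, (∀ w ∈ lower lev i, (D - G.laplacian f) w = (Pi.single y 1 : V → ℤ) w) ∧
      levelDrop lev p f i = 1 := by
  obtain ⟨f, hF, hf⟩ :=
    RankGE.exists_single_add_single_le (a := 1) (b := 1) hrank zero_le_one zero_le_one x y
  have single_le : ∀ w, (Pi.single y 1 : V → ℤ) w ≤ (D - G.laplacian f) w := fun w =>
    (le_add_of_nonneg_left (effective_single zero_le_one x w)).trans (hf w)
  have hfx : 1 ≤ (D - G.laplacian f) x :=
    (by simpa using effective_single zero_le_one y x : (1 : ℤ) ≤ _).trans (hf x)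
  have hdrop := h.levelDrop_pos hD hF hx (hDx.trans_le hfx)
  have hsum : ∑ w ∈ lower lev i, (Pi.single y 1 : V → ℤ) w = 1 := by
    simp [sum_pi_single', mem_lower.1 hy]
  have hle : ∑ w ∈ lower lev i, (Pi.single y 1 : V → ℤ) w
      ≤ ∑ w ∈ lower lev i, (D - G.laplacian f) w := sum_le_sum fun w _ => single_le w
  have hkey := h.sum_lower_add_le hD hD₀ hF i.le_succ hdrop
  have hcard : (0 : ℤ) < #(lower lev i) := Nat.cast_pos.2 (h.card_lower_pos i)
  rw [h.lower_top, ← degree] at hkey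
  rw [← h.card_lower_add_card_level] at hdeg
  push_cast at hdeg
  have hdrop_eq : levelDrop lev p f i = 1 := by nlinarith
  rw [hdrop_eq] at hkey
  refine ⟨f, fun w hw => ?_, hdrop_eq⟩
  exact ((sum_eq_sum_iff_of_le fun w _ => single_le w).1 (by linarith) w hw).symm

theorem sum_lower_of_lt_one (h : QBLeveling G (i + 1) lev p) (hD : G.Reduced (p 0) D)
    (hD₀ : Effective D) (hrank : G.RankGE D 2) (hdeg : degree D ≤ Fintype.card V + 1) {x : V}
    (hx : x ∈ level lev (i + 1)) (hDx : D x < 1) :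
    ∑ w ∈ lower lev i, D w = #(lower lev i) + 2 := by
  have hp := h.anchor_zero_mem_lower i
  obtain ⟨f, hf, hdrop⟩ := h.exists_eq_single_on_lower hD hD₀ hrank hdeg hx hDx hp
  rw [h.sum_lower_eq (f := f) i.le_succ, hdrop, sum_congr rfl hf, sum_pi_single', if_pos hp]
  ring

/-- With `x` uncovered and at least two lower vertices, both `p 0` and `p i` can be demanded
together with `x`, which changes the parity of the coefficient of `p 0`. -/
theorem one_le_of_mem_level_of_pos (h : QBLeveling G (i + 1) lev p) (hD : G.Reduced (p 0) D)
    (hD₀ : Effective D) (hrank : G.RankGE D 2) (hdeg : degree D ≤ Fintype.card V + 1) (hi : 1 ≤ i)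
    {x : V} (hx : x ∈ level lev (i + 1)) : 1 ≤ D x := by
  by_contra! hDx
  have hp := h.anchor_zero_mem_lower i
  have lev_anchor := h.lev_anchor i i.le_succ
  have hne : p 0 ≠ p i := fun heq => by
    rw [← heq, h.lev_anchor 0 (Nat.zero_le _)] at lev_anchor
    omega
  obtain ⟨f, hf, -⟩ := h.exists_eq_single_on_lower hD hD₀ hrank hdeg hx hDx hp
  obtain ⟨g, hg, -⟩ := h.exists_eq_single_on_lower hD hD₀ hrank hdeg hx hDx
    (mem_lower.2 lev_anchor.le)
  have hfp := hf (p 0) hp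
  have hgp := hg (p 0) hp
  rw [Pi.sub_apply, Pi.single_eq_same] at hfp
  rw [Pi.sub_apply, Pi.single_eq_of_ne hne] at hgp
  have := h.two_dvd_laplacian_anchor_zero f
  have := h.two_dvd_laplacian_anchor_zero g
  omega

theorem one_le_of_mem_level_of_one_lt_card (h : QBLeveling G (i + 1) lev p) (hD : G.Reduced (p 0) D)
    (hD₀ : Effective D) (hrank : G.RankGE D 2) (hdeg : degree D ≤ Fintype.card V + 1)
    (hlevel : 1 < #(level lev (i + 1))) {x : V} (hx : x ∈ level lev (i + 1)) : 1 ≤ D x := by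
  by_contra! hDx
  obtain ⟨y, hy, hyx⟩ := exists_mem_ne hlevel x
  obtain ⟨f, hF, hf⟩ :=
    RankGE.exists_single_add_single_le (a := 1) (b := 1) hrank zero_le_one zero_le_one x y
  have hfx : 1 ≤ (D - G.laplacian f) x := by simpa [hyx.symm] using hf x
  have hfy : 1 ≤ (D - G.laplacian f) y := by simpa [hyx] using hf y
  have hgain := hDx.trans_le hfx
  have hdrop := h.levelDrop_pos hD hF hx hgain
  have hA := h.sum_lower_of_lt_one hD hD₀ hrank hdeg hx hDx
  have hsum := h.sum_lower_eq (D := D) (f := f) i.le_succ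
  have hsum_nonneg : 0 ≤ ∑ w ∈ lower lev i, (D - G.laplacian f) w := sum_nonneg fun w _ => hF w
  have hcard : (0 : ℤ) < #(lower lev i) := Nat.cast_pos.2 (h.card_lower_pos i)
  have hdrop_eq : levelDrop lev p f i = 1 := by nlinarith
  have hfy_eq := h.apply_eq_anchor_of_levelDrop_eq_one hD hF hdrop_eq hx
    (h.apply_lt_anchor hD hF hx hgain) hy hyx
  have hDy := h.sub_laplacian_add_levelDrop_le hD hF hy hfy_eq
  have hlt : #(level lev (i + 1)) < ∑ z ∈ level lev (i + 1), D z + levelDrop lev p f i := by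
    rw [levelDrop, ← sum_add_distrib, ← nsmul_one, ← sum_const]
    exact sum_lt_sum (fun z hz => h.one_le_add_anchor_sub hD hD₀ hF hdrop hz)
      ⟨y, hy, by linarith⟩
  rw [← h.sum_lower_add_sum_level, ← h.card_lower_add_card_level] at hdeg
  push_cast at hdeg
  linarith

theorem sum_lower_of_forall_one_le (h : QBLeveling G (i + 1) lev p) (hD : G.Reduced (p 0) D)
    (hD₀ : Effective D) (hrank : G.RankGE D 2) (hdeg : degree D ≤ Fintype.card V + 1)
    (hlevel : ∀ z ∈ level lev (i + 1), 1 ≤ D z) :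
    ∑ w ∈ lower lev i, D w = #(lower lev i) + 1 := by
  have hlower := h.card_lower_add_le_sum_lower hD hD₀ hrank one_le_two i.le_succ
  have hcard := card_nsmul_le_sum _ _ _ hlevel
  rw [nsmul_one] at hcard
  rw [← h.sum_lower_add_sum_level, ← h.card_lower_add_card_level] at hdeg
  push_cast at hdeg
  linarith

theorem eq_one_of_forall_one_le (h : QBLeveling G (i + 1) lev p) (hD : G.Reduced (p 0) D)
    (hD₀ : Effective D) (hrank : G.RankGE D 2) (hdeg : degree D ≤ Fintype.card V + 1)
    (hlevel : ∀ z ∈ level lev (i + 1), 1 ≤ D z) {z : V} (hz : z ∈ level lev (i + 1)) :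
    D z = 1 := by
  have hlower := h.sum_lower_of_forall_one_le hD hD₀ hrank hdeg hlevel
  have hcard := card_nsmul_le_sum _ _ _ hlevel
  rw [nsmul_one] at hcard
  rw [← h.sum_lower_add_sum_level, ← h.card_lower_add_card_level] at hdeg
  push_cast at hdeg
  exact ((sum_eq_sum_iff_of_le hlevel).1 (by rw [sum_const, nsmul_one]; linarith) z hz).symm

theorem linEquiv_single_of_forall_one_le (h : QBLeveling G (i + 1) lev p) (hD : G.Reduced (p 0) D)
    (hD₀ : Effective D) (hrank : G.RankGE D 2) (hdeg : degree D ≤ Fintype.card V + 1)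
    (hlevel : ∀ z ∈ level lev (i + 1), 1 ≤ D z) {x : V} (hx : x ∈ level lev (i + 1)) :
    G.LinEquiv D (Pi.single x (degree D)) := by
  have eq_one : ∀ z ∈ level lev (i + 1), D z = 1 := fun z =>
    h.eq_one_of_forall_one_le hD hD₀ hrank hdeg hlevel
  obtain ⟨f, hF, hf⟩ := hrank.exists_single_le zero_le_two x
  have hfx : 2 ≤ (D - G.laplacian f) x := by simpa using hf x
  have hgain : D x < (D - G.laplacian f) x := by linarith [eq_one x hx]
  have hdrop := h.levelDrop_pos hD hF hx hgain
  have hsum := h.sum_lower_eq (D := D) (f := f) i.le_succ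
  rw [h.sum_lower_of_forall_one_le hD hD₀ hrank hdeg hlevel] at hsum
  have hsum_nonneg : 0 ≤ ∑ w ∈ lower lev i, (D - G.laplacian f) w := sum_nonneg fun w _ => hF w
  have hdrop_eq : levelDrop lev p f i = 1 := by nlinarith
  rw [hdrop_eq] at hsum
  have lower_eq_zero : ∀ w ∈ lower lev i, (D - G.laplacian f) w = 0 :=
    (sum_eq_zero_iff_of_nonneg fun w _ => hF w).1 (by linarith)
  have level_eq_zero : ∀ z ∈ level lev (i + 1), z ≠ x → (D - G.laplacian f) z = 0 := by
    intro z hz hzx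
    have hfz := h.apply_eq_anchor_of_levelDrop_eq_one hD hF hdrop_eq hx
      (h.apply_lt_anchor hD hF hx hgain) hz hzx
    linarith [h.sub_laplacian_add_levelDrop_le hD hF hz hfz, eq_one z hz, hF z]
  refine linEquiv_single_degree (f := f) fun w hwx => ?_
  rcases (h.lev_le w).lt_or_eq with hw | hw
  · exact lower_eq_zero w (mem_lower.2 (Nat.le_of_lt_succ hw))
  · exact level_eq_zero w (mem_level.2 hw) hwx

end TopLevel

theorem linEquiv_single_of_realises {D : V → ℤ} (h : QBLeveling G m lev p) (hG : G.Connected)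
    (hcard : Fintype.card V ≠ 2) (hD : G.Realises 2 D) :
    G.LinEquiv D (Pi.single (p m) (Fintype.card V + 1)) := by
  have : Nonempty V := hG.1
  obtain ⟨hrank, hdeg⟩ := hD
  replace hrank : G.RankGE D 2 := hrank ▸ rankGE_rank G D
  rw [h.gonality_two hG] at hdeg
  rw [← hdeg]
  cases m with
  | zero =>
    exact linEquiv_single_degree (f := 0) fun w hw =>
      (hw (h.eq_anchor_zero w (Nat.le_zero.1 (h.lev_le w)))).elim
  | succ i =>
    obtain ⟨D', hDD', hD'₀, hD'⟩ := (hrank.winnable zero_le_two).exists_reduced hG (p 0)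
    rw [← hDD'.degree_eq] at hdeg ⊢
    replace hrank := hrank.congr hDD'
    have hp : p (i + 1) ∈ level lev (i + 1) := mem_level.2 (h.lev_anchor _ le_rfl)
    refine hDD'.trans <|
      h.linEquiv_single_of_forall_one_le hD' hD'₀ hrank hdeg.le (fun z hz => ?_) hp
    rcases Nat.eq_zero_or_pos i with rfl | hi
    · have hlevel : 0 < #(level lev (0 + 1)) := card_pos.2 ⟨_, hp⟩
      have hN := h.card_lower_add_card_level
      rw [h.lower_zero, card_singleton] at hN
      exact h.one_le_of_mem_level_of_one_lt_card hD' hD'₀ hrank hdeg.le (by omega) hz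
    · exact h.one_le_of_mem_level_of_pos hD' hD'₀ hrank hdeg.le hi hz

end QBLeveling

namespace IsQBLabelling

variable {G : Multigraph V} {m : ℕ} {q : ℕ → ℕ} {ℓ : V → ℕ × ℕ}

theorem exists_anchor (hℓ : G.IsQBLabelling m q ℓ) : ∃ p : ℕ → V, ∀ i ≤ m, ℓ (p i) = (i, 1) := by
  have exists_vertex : ∀ i, ∃ v, ℓ v = (min i m, 1) := fun i => by
    refine hℓ.2.2.2.1 _ 1 (min_le_right i m) le_rfl ?_
    rw [qbSize]
    split_ifs with h0
    · exact le_rfl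
    · exact hℓ.1 _ (Nat.one_le_iff_ne_zero.2 h0) (min_le_right i m)
  choose p hp using exists_vertex
  exact ⟨p, fun i hi => by rw [hp, min_eq_left hi]⟩

theorem card_level (hℓ : G.IsQBLabelling m q ℓ) {i : ℕ} (hi : i ≤ m) :
    #(level (fun v => (ℓ v).1) i) = qbSize q i := by
  obtain ⟨-, hinj, hrange, hsurj, -⟩ := hℓ
  have himage : (level (fun v => (ℓ v).1) i).image ℓ = {i} ×ˢ Icc 1 (qbSize q i) := by
    ext ⟨a, j⟩
    simp only [mem_image, mem_level, mem_product, mem_singleton, mem_Icc]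
    constructor
    · rintro ⟨v, rfl, hv⟩
      have := hrange v
      rw [hv] at this ⊢
      exact ⟨rfl, this.2⟩
    · rintro ⟨rfl, hj, hjq⟩
      obtain ⟨v, hv⟩ := hsurj a j hi hj hjq
      exact ⟨v, congrArg Prod.fst hv, hv⟩
  rw [← card_image_of_injective _ hinj, himage, card_product, card_singleton, one_mul,
    Nat.card_Icc, Nat.add_sub_cancel]

theorem card_lower (hℓ : G.IsQBLabelling m q ℓ) {i : ℕ} (hi : i ≤ m) :
    #(lower (fun v => (ℓ v).1) i) = ∑ k ∈ Icc 1 i, q k + 1 := by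
  induction i with
  | zero =>
    have : lower (fun v => (ℓ v).1) 0 = level (fun v => (ℓ v).1) 0 := by
      ext v
      simp
    rw [this, hℓ.card_level hi]
    rfl
  | succ i ih =>
    rw [card_lower_succ, ih (by omega), hℓ.card_level hi, sum_Icc_succ_top (by omega)]
    exact add_right_comm _ _ _

theorem exists_leveling (hℓ : G.IsQBLabelling m q ℓ) :
    ∃ p, QBLeveling G m (fun v => (ℓ v).1) p := by
  obtain ⟨p, hp⟩ := hℓ.exists_anchor
  obtain ⟨-, hinj, hrange, -, hmult⟩ := id hℓ
  have eq_anchor : ∀ v, (ℓ v).2 = 1 → v = p (ℓ v).1 := fun v hv =>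
    hinj (by rw [hp _ (hrange v).1, ← hv])
  refine ⟨p, fun v => (hrange v).1, fun i hi => congrArg Prod.fst (hp i hi), ?_, ?_, ?_, ?_⟩
  · intro v hv
    obtain ⟨-, hv₁, hv₂⟩ := hrange v
    rw [hv, qbSize, if_pos rfl] at hv₂
    rw [← hv]
    exact eq_anchor v (le_antisymm hv₂ hv₁)
  · intro v w hvw hlev
    rw [hmult v w hvw, if_pos hlev]
  · intro i w hw
    have hi : i ≤ m := by linarith [(hrange w).1]
    have hne : p i ≠ w := fun heq => by
      rw [← heq, hp i hi] at hw
      omega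
    rw [hmult _ _ hne, hp i hi, hw, hℓ.card_lower hi]
    simp
  · intro i v w hvi hiw hvp
    have hne : v ≠ w := by
      rintro rfl
      omega
    rw [hmult v w hne, if_neg (by omega), if_neg, if_neg (by omega)]
    rintro ⟨hlev, hv⟩
    refine hvp ((eq_anchor v hv).trans ?_)
    congr 1
    omega

end IsQBLabelling

end Multigraph

/-- On a quasi-banana graph with first gonality `k ≠ 2`, any two divisors
realising the second gonality are linearly equivalent. -/
theorem stmt3 (G : Multigraph V) (hG : G.Connected) (hQB : G.IsQuasiBanana)
    (k : ℕ) (hk : G.gonality 1 = (k : ℤ)) (hk2 : k ≠ 2)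
    (D D' : V → ℤ) (hD : G.Realises 2 D) (hD' : G.Realises 2 D') :
    G.LinEquiv D D' := by
  obtain ⟨m, q, ℓ, hℓ⟩ := hQB
  obtain ⟨p, h⟩ := hℓ.exists_leveling
  have hcard : Fintype.card V ≠ 2 := fun hV => hk2 <| by
    exact_mod_cast hk.symm.trans ((h.gonality_one hG).trans (congrArg Nat.cast hV))
  exact (h.linEquiv_single_of_realises hG hcard hD).trans
    (h.linEquiv_single_of_realises hG hcard hD').symm
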